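/- arXiv:2604.19960 — 5 statements merged into one kernel-verified Lean document; each statement's English description precedes it below -/
import Mathlib

section
/- The incidence (Levi) graph of the family of attenuated seventh chords F i = {i, i+2, i+6} (i : ZMod 7) over the point set ZMod 7 has girth exactly 6. -/
/-!
The differences of `{0, 2, 6}` represent every nonzero residue mod `7` exactly once, so two
distinct chords share at most one pitch class (`attSeventh_linear`); hence the Levi graph has no
4-cycle. It is bipartite, so it has no odd cycle either, and every cycle has length at least six.
The chords of degrees `0, 2, 1` meet pairwise in the pitch classes `2, 1, 0`, which gives a
hexagon.
-/

/-- The attenuated seventh chord of degree `i`: the set `{i, i+2, i+6}` in `ZMod 7`. -/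
def attSeventh (i : ZMod 7) : Finset (ZMod 7) := {i, i + 2, i + 6}

/-- The incidence (Levi) graph of the attenuated seventh chords over the seven pitch
classes: a pitch class `p` (left vertex) is adjacent to a degree `i` (right vertex)
precisely when `p ∈ attSeventh i`. -/
def attSeventhLevi : SimpleGraph (ZMod 7 ⊕ ZMod 7) :=
  SimpleGraph.fromRel (fun x y =>
    ∃ p i : ZMod 7, x = Sum.inl p ∧ y = Sum.inr i ∧ p ∈ attSeventh i)

lemma attSeventhLevi_adj_inl_inr {p i : ZMod 7} :
    attSeventhLevi.Adj (Sum.inl p) (Sum.inr i) ↔ p ∈ attSeventh i := by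
  simp [attSeventhLevi]

lemma attSeventhLevi_adj_inr_inl {p i : ZMod 7} :
    attSeventhLevi.Adj (Sum.inr i) (Sum.inl p) ↔ p ∈ attSeventh i := by
  rw [SimpleGraph.adj_comm, attSeventhLevi_adj_inl_inr]

lemma attSeventhLevi_not_adj_inl_inl {p q : ZMod 7} :
    ¬ attSeventhLevi.Adj (Sum.inl p) (Sum.inl q) := by
  simp [attSeventhLevi]

lemma attSeventhLevi_not_adj_inr_inr {i j : ZMod 7} :
    ¬ attSeventhLevi.Adj (Sum.inr i) (Sum.inr j) := by
  simp [attSeventhLevi]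

set_option synthInstance.maxHeartbeats 400000 in
set_option synthInstance.maxSize 1000 in
/-- Two distinct chords have at most one pitch class in common. -/
lemma attSeventh_linear : ∀ i j p q : ZMod 7, p ∈ attSeventh i → q ∈ attSeventh i →
    p ∈ attSeventh j → q ∈ attSeventh j → p = q ∨ i = j := by
  decide +kernel

/-- The Levi graph contains no 4-cycle `x y z w`. -/
lemma attSeventhLevi_no_square {x y z w : ZMod 7 ⊕ ZMod 7} (hxy : attSeventhLevi.Adj x y)
    (hyz : attSeventhLevi.Adj y z) (hzw : attSeventhLevi.Adj z w) (hwx : attSeventhLevi.Adj w x) :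
    x = z ∨ y = w := by
  rcases x with x | x <;> rcases y with y | y <;> rcases z with z | z <;> rcases w with w | w <;>
    simp only [attSeventhLevi_adj_inl_inr, attSeventhLevi_adj_inr_inl,
      attSeventhLevi_not_adj_inl_inl, attSeventhLevi_not_adj_inr_inr] at hxy hyz hzw hwx
  · simpa using attSeventh_linear y w x z hxy hyz hwx hzw
  · simpa [or_comm] using attSeventh_linear x z y w hxy hwx hyz hzw

/-- The 2-colouring of the Levi graph separating pitch classes from chords. -/
def attSeventhLeviColoring : attSeventhLevi.Coloring Bool :=
  SimpleGraph.Coloring.mk Sum.isLeft (by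
    rintro (p | i) (q | j) h
    · exact (attSeventhLevi_not_adj_inl_inl h).elim
    · simp
    · simp
    · exact (attSeventhLevi_not_adj_inr_inr h).elim)

lemma attSeventhLevi_cycle_length_ne_four {a : ZMod 7 ⊕ ZMod 7} (w : attSeventhLevi.Walk a a)
    (hw : w.IsCycle) : w.length ≠ 4 := by
  intro h4
  match w, hw, h4 with
  | .cons h₁ (.cons h₂ (.cons h₃ (.cons h₄ .nil))), hw, _ =>
    have hnodup := hw.support_nodup
    rcases attSeventhLevi_no_square h₁ h₂ h₃ h₄ with h | h <;> subst h <;> simp at hnodup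

/-- The Levi graph of the attenuated seventh chords (the Heawood graph) has girth
exactly six. -/
theorem attSeventhLevi_egirth : attSeventhLevi.egirth = 6 := by
  apply le_antisymm
  · have h₁ : attSeventhLevi.Adj (.inl 0) (.inr 0) := attSeventhLevi_adj_inl_inr.2 (by decide)
    have h₂ : attSeventhLevi.Adj (.inr 0) (.inl 2) := attSeventhLevi_adj_inr_inl.2 (by decide)
    have h₃ : attSeventhLevi.Adj (.inl 2) (.inr 2) := attSeventhLevi_adj_inl_inr.2 (by decide)
    have h₄ : attSeventhLevi.Adj (.inr 2) (.inl 1) := attSeventhLevi_adj_inr_inl.2 (by decide)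
    have h₅ : attSeventhLevi.Adj (.inl 1) (.inr 1) := attSeventhLevi_adj_inl_inr.2 (by decide)
    have h₆ : attSeventhLevi.Adj (.inr 1) (.inl 0) := attSeventhLevi_adj_inr_inl.2 (by decide)
    let w : attSeventhLevi.Walk (.inl 0) (.inl 0) :=
      .cons h₁ (.cons h₂ (.cons h₃ (.cons h₄ (.cons h₅ (.cons h₆ .nil)))))
    have hw : w.IsCycle :=
      { edges_nodup := by
          simp only [w, SimpleGraph.Walk.edges_cons, SimpleGraph.Walk.edges_nil]; decide
        ne_nil := by simp [w]
        support_nodup := by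
          simp only [w, SimpleGraph.Walk.support_cons, SimpleGraph.Walk.support_nil]; decide }
    exact SimpleGraph.egirth_le_length hw
  · rw [SimpleGraph.le_egirth]
    intro a w hw
    have h3 := hw.three_le_length
    have h4 := attSeventhLevi_cycle_length_ne_four w hw
    have heven : Even w.length := (attSeventhLeviColoring.even_length_iff_congr w).2 Iff.rfl
    have h6 : 6 ≤ w.length := by
      obtain ⟨k, hk⟩ := heven
      omega
    exact_mod_cast h6
end

section
/- Let H be a finite set with exactly 6 elements. Then any two distinct synthemes of H have at most one duad in common. Hence the duads and synthemes of H form a combinatorial configuration {15_3} (the Cremona–Richmond configuration). -/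
/-! A syntheme has three disjoint duads covering `H`, so any two of its duads force the third,
as the complement of their union (`syntheme_eq_of_two_duads`). Two synthemes with two duads in
common are therefore equal. -/

/-- The synthemes of a finite set `H`: sets of three pairwise disjoint duads
(two-element subsets of `H`) whose union is all of `H`, i.e. perfect matchings of `H`. -/
def synthemes {α : Type*} [DecidableEq α] (H : Finset α) :
    Finset (Finset (Finset α)) :=
  ((H.powersetCard 2).powersetCard 3).filter
    (fun P => (∀ D ∈ P, ∀ D' ∈ P, D ≠ D' → Disjoint D D') ∧ P.sup id = H)

/-- Two distinct duads of a syntheme determine it: the third duad is their complement in `H`. -/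
theorem syntheme_eq_of_two_duads {α : Type*} [DecidableEq α] {H : Finset α}
    {P : Finset (Finset α)} (hP : P ∈ synthemes H) {A B : Finset α}
    (hA : A ∈ P) (hB : B ∈ P) (hAB : A ≠ B) : P = {A, B, H \ (A ∪ B)} := by
  obtain ⟨hP, hdisj, hsup⟩ := Finset.mem_filter.mp hP
  have hcard := (Finset.mem_powersetCard.mp hP).2
  have hB' : B ∈ P.erase A := Finset.mem_erase.mpr ⟨hAB.symm, hB⟩
  have hone : ((P.erase A).erase B).card = 1 := by
    rw [Finset.card_erase_of_mem hB', Finset.card_erase_of_mem hA, hcard]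
  obtain ⟨C, hC⟩ := Finset.card_eq_one.mp hone
  have hPeq : P = {A, B, C} := by
    rw [← Finset.insert_erase hA, ← Finset.insert_erase hB', hC]
  have hCmem : C ∈ (P.erase A).erase B := by simp [hC]
  simp only [Finset.mem_erase] at hCmem
  obtain ⟨hCB, hCA, hCP⟩ := hCmem
  have hunion : (A ∪ B) ∪ C = H := by
    rw [← hsup, hPeq]
    simp [Finset.union_assoc]
  have hdis : Disjoint (A ∪ B) C :=
    Finset.disjoint_union_left.mpr
      ⟨hdisj A hA C hCP hCA.symm, hdisj B hB C hCP hCB.symm⟩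
  have hCeq : H \ (A ∪ B) = C := by
    rw [← hunion, Finset.union_sdiff_cancel_left hdis]
  rw [hCeq, hPeq]

/-- For a six-element set `H`, any two distinct synthemes have at most one duad in
common.  Hence the duads and synthemes of `H` form a combinatorial configuration
`{15₃}`, the Cremona–Richmond configuration. -/
theorem synthemes_share_at_most_one_duad {α : Type*} [DecidableEq α]
    (H : Finset α) (hH : H.card = 6) :
    ∀ P ∈ synthemes H, ∀ Q ∈ synthemes H, P ≠ Q → (P ∩ Q).card ≤ 1 := by
  intro P hP Q hQ hPQ
  by_contra! h
  obtain ⟨A, hA, B, hB, hAB⟩ := Finset.one_lt_card.mp h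
  rw [Finset.mem_inter] at hA hB
  exact hPQ ((syntheme_eq_of_two_duads hP hA.1 hB.1 hAB).trans
    (syntheme_eq_of_two_duads hQ hA.2 hB.2 hAB).symm)
end

section
/- Let H be a finite set with exactly 6 elements. The incidence (Levi) graph whose one vertex class is the set of duads of H and whose other vertex class is the set of synthemes of H, with a duad adjacent to a syntheme exactly when the duad is a member of the syntheme, has girth exactly 8. In particular this graph (Tutte's 8-cage) contains no hexacycles. -/
/-- The incidence (Levi) graph of the duads and synthemes of `H`: a duad `D`
(left vertex) is adjacent to a syntheme `P` (right vertex) precisely when `D ∈ P`. -/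
def duadSynthemeLevi {α : Type*} [DecidableEq α] (H : Finset α) :
    SimpleGraph (↥(H.powersetCard 2) ⊕ ↥(synthemes H)) :=
  SimpleGraph.fromRel (fun x y =>
    ∃ (D : ↥(H.powersetCard 2)) (P : ↥(synthemes H)),
      x = Sum.inl D ∧ y = Sum.inr P ∧ (D : Finset α) ∈ (P : Finset (Finset α)))

section DuadSyntheme

variable {α : Type*} [DecidableEq α] {H : Finset α}

lemma syntheme_disjoint {P : Finset (Finset α)} (hP : P ∈ synthemes H) {D E : Finset α}
    (hD : D ∈ P) (hE : E ∈ P) (h : D ≠ E) : Disjoint D E :=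
  (Finset.mem_filter.1 hP).2.1 D hD E hE h

lemma syntheme_duad {P : Finset (Finset α)} (hP : P ∈ synthemes H) {D : Finset α}
    (hD : D ∈ P) : D ⊆ H ∧ D.card = 2 :=
  Finset.mem_powersetCard.1
    ((Finset.mem_powersetCard.1 (Finset.mem_filter.1 hP).1).1 hD)

/-- A syntheme is determined by any two of its duads: the third is their complement. -/
lemma syntheme_eq {P : Finset (Finset α)} (hP : P ∈ synthemes H) {D E : Finset α}
    (hD : D ∈ P) (hE : E ∈ P) (h : D ≠ E) : P = {D, E, H \ (D ∪ E)} := by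
  have hcard : P.card = 3 := (Finset.mem_powersetCard.1 (Finset.mem_filter.1 hP).1).2
  have hsup : P.sup id = H := (Finset.mem_filter.1 hP).2.2
  obtain ⟨F, hF, hFn⟩ : ∃ F ∈ P, F ∉ ({D, E} : Finset (Finset α)) := by
    apply Finset.exists_mem_notMem_of_card_lt_card
    rw [Finset.card_pair h, hcard]
    norm_num
  simp only [Finset.mem_insert, Finset.mem_singleton, not_or] at hFn
  have hPeq : P = {D, E, F} := by
    symm
    apply Finset.eq_of_subset_of_card_le
    · simp [Finset.insert_subset_iff, hD, hE, hF]
    · rw [hcard, Finset.card_eq_three.2 ⟨D, E, F, h, Ne.symm hFn.1, Ne.symm hFn.2, rfl⟩]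
  have hFD := syntheme_disjoint hP hF hD hFn.1
  have hFE := syntheme_disjoint hP hF hE hFn.2
  have hF' : H \ (D ∪ E) = F := by
    rw [← hsup, hPeq]
    simp only [Finset.sup_insert, Finset.sup_singleton, id, Finset.sup_eq_union]
    rw [← Finset.union_assoc, Finset.union_sdiff_cancel_left]
    exact (Finset.disjoint_union_right.2 ⟨hFD, hFE⟩).symm
  rw [hF', hPeq]

lemma syntheme_unique {P Q : Finset (Finset α)} (hP : P ∈ synthemes H) (hQ : Q ∈ synthemes H)
    {D E : Finset α} (h : D ≠ E) (hDP : D ∈ P) (hEP : E ∈ P) (hDQ : D ∈ Q) (hEQ : E ∈ Q) :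
    P = Q := by
  rw [syntheme_eq hP hDP hEP h, syntheme_eq hQ hDQ hEQ h]

/-- Distinct duads `D, E, F` that are pairwise contained in common synthemes `P, Q, R` form a
syntheme themselves, so `P = Q`. -/
lemma syntheme_no_triangle {P Q R : Finset (Finset α)} (hP : P ∈ synthemes H)
    (hQ : Q ∈ synthemes H) (hR : R ∈ synthemes H) {D E F : Finset α}
    (hDE : D ≠ E) (hEF : E ≠ F) (hFD : F ≠ D) (hDP : D ∈ P) (hEP : E ∈ P)
    (hEQ : E ∈ Q) (hFQ : F ∈ Q) (hFR : F ∈ R) (hDR : D ∈ R) : P = Q := by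
  have hPeq := syntheme_eq hP hDP hEP hDE
  have hmem : H \ (D ∪ E) ∈ P := by rw [hPeq]; simp
  have hF : F = H \ (D ∪ E) := by
    apply Finset.eq_of_subset_of_card_le
    · rw [Finset.subset_sdiff, Finset.disjoint_union_right]
      exact ⟨(syntheme_duad hQ hFQ).1, syntheme_disjoint hR hFR hDR hFD,
        syntheme_disjoint hQ hFQ hEQ hEF.symm⟩
    · rw [(syntheme_duad hP hmem).2, (syntheme_duad hQ hFQ).2]
  exact syntheme_unique hP hQ hEF hEP (hF ▸ hmem) hEQ hFQ

@[simp] lemma levi_adj_inl_inr (D : ↥(H.powersetCard 2)) (P : ↥(synthemes H)) :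
    (duadSynthemeLevi H).Adj (Sum.inl D) (Sum.inr P) ↔ (D : Finset α) ∈ (P : Finset _) := by
  constructor
  · intro h
    simp only [duadSynthemeLevi, SimpleGraph.fromRel_adj] at h
    obtain ⟨-, ⟨D', P', h1, h2, h3⟩ | ⟨D', P', h1, h2, h3⟩⟩ := h <;> cases h1 <;> cases h2
    exact h3
  · intro h
    simp only [duadSynthemeLevi, SimpleGraph.fromRel_adj]
    exact ⟨by simp, Or.inl ⟨D, P, rfl, rfl, h⟩⟩

@[simp] lemma levi_adj_inr_inl (D : ↥(H.powersetCard 2)) (P : ↥(synthemes H)) :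
    (duadSynthemeLevi H).Adj (Sum.inr P) (Sum.inl D) ↔ (D : Finset α) ∈ (P : Finset _) := by
  rw [SimpleGraph.adj_comm, levi_adj_inl_inr]

@[simp] lemma levi_not_adj_inl_inl (D E : ↥(H.powersetCard 2)) :
    ¬ (duadSynthemeLevi H).Adj (Sum.inl D) (Sum.inl E) := by
  simp [duadSynthemeLevi]

@[simp] lemma levi_not_adj_inr_inr (P Q : ↥(synthemes H)) :
    ¬ (duadSynthemeLevi H).Adj (Sum.inr P) (Sum.inr Q) := by
  simp [duadSynthemeLevi]

lemma levi_isLeft_ne {x y : ↥(H.powersetCard 2) ⊕ ↥(synthemes H)}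
    (h : (duadSynthemeLevi H).Adj x y) : x.isLeft ≠ y.isLeft := by
  rcases x with x | x <;> rcases y with y | y <;> simp_all

lemma levi_no_four_cycle {u v w x : ↥(H.powersetCard 2) ⊕ ↥(synthemes H)}
    (huv : (duadSynthemeLevi H).Adj u v) (hvw : (duadSynthemeLevi H).Adj v w)
    (hwx : (duadSynthemeLevi H).Adj w x) (hxu : (duadSynthemeLevi H).Adj x u)
    (huw : u ≠ w) (hvx : v ≠ x) : False := by
  rcases u with u | u <;> rcases v with v | v <;> simp at huv <;>
  rcases w with w | w <;> simp at hvw <;> rcases x with x | x <;> simp at hwx hxu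
  · exact hvx (congrArg _ (Subtype.ext (syntheme_unique v.2 x.2
      (fun h => huw (congrArg _ (Subtype.ext h))) huv hvw hxu hwx)))
  · exact huw (congrArg _ (Subtype.ext (syntheme_unique u.2 w.2
      (fun h => hvx (congrArg _ (Subtype.ext h))) huv hxu hvw hwx)))

lemma levi_no_six_cycle {u v w x y z : ↥(H.powersetCard 2) ⊕ ↥(synthemes H)}
    (huv : (duadSynthemeLevi H).Adj u v) (hvw : (duadSynthemeLevi H).Adj v w)
    (hwx : (duadSynthemeLevi H).Adj w x) (hxy : (duadSynthemeLevi H).Adj x y)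
    (hyz : (duadSynthemeLevi H).Adj y z) (hzu : (duadSynthemeLevi H).Adj z u)
    (huw : u ≠ w) (hwy : w ≠ y) (hyu : y ≠ u)
    (hvx : v ≠ x) (hxz : x ≠ z) (hzv : z ≠ v) : False := by
  rcases u with u | u <;> rcases v with v | v <;> simp at huv <;>
  rcases w with w | w <;> simp at hvw <;> rcases x with x | x <;> simp at hwx <;>
  rcases y with y | y <;> simp at hxy <;> rcases z with z | z <;> simp at hyz hzu
  · exact hvx (congrArg _ (Subtype.ext (syntheme_no_triangle v.2 x.2 z.2
      (fun h => huw (congrArg _ (Subtype.ext h))) (fun h => hwy (congrArg _ (Subtype.ext h)))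
      (fun h => hyu (congrArg _ (Subtype.ext h))) huv hvw hwx hxy hyz hzu)))
  · exact hwy (congrArg _ (Subtype.ext (syntheme_no_triangle w.2 y.2 u.2
      (fun h => hvx (congrArg _ (Subtype.ext h))) (fun h => hxz (congrArg _ (Subtype.ext h)))
      (fun h => hzv (congrArg _ (Subtype.ext h))) hvw hwx hxy hyz hzu huv)))

lemma levi_eight_le_length {u : ↥(H.powersetCard 2) ⊕ ↥(synthemes H)}
    (p : (duadSynthemeLevi H).Walk u u) (hp : p.IsCycle) : 8 ≤ p.length := by
  have heven : Even p.length := by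
    have h := (SimpleGraph.Coloring.mk (G := duadSynthemeLevi H) Sum.isLeft
      levi_isLeft_ne).even_length_iff_congr p
    exact h.2 Iff.rfl
  have h3 := hp.three_le_length
  by_contra hlt
  have hadj : ∀ i, i < p.length → (duadSynthemeLevi H).Adj (p.getVert i) (p.getVert (i + 1)) :=
    fun i hi => p.adj_getVert_succ hi
  have hinj : ∀ i j, 1 ≤ i → i < j → j ≤ p.length → p.getVert i ≠ p.getVert j :=
    fun i j hi hij hj h => hij.ne
      (hp.getVert_injOn ⟨hi, hij.le.trans hj⟩ ⟨hi.trans hij.le, hj⟩ h)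
  have hclose : (duadSynthemeLevi H).Adj (p.getVert p.length) (p.getVert 1) := by
    have := hadj 0 (by omega)
    rw [p.getVert_zero] at this
    rwa [p.getVert_length]
  have hcases : p.length = 4 ∨ p.length = 6 := by
    obtain ⟨k, hk⟩ := heven
    omega
  -- The closed walk is read off at the indices `1, …, p.length`, where it is injective.
  rcases hcases with h | h <;> rw [h] at hadj hinj hclose
  · exact levi_no_four_cycle (hadj 1 (by omega)) (hadj 2 (by omega)) (hadj 3 (by omega)) hclose
      (hinj 1 3 (by omega) (by omega) (by omega)) (hinj 2 4 (by omega) (by omega) (by omega))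
  · exact levi_no_six_cycle (hadj 1 (by omega)) (hadj 2 (by omega)) (hadj 3 (by omega))
      (hadj 4 (by omega)) (hadj 5 (by omega)) hclose
      (hinj 1 3 (by omega) (by omega) (by omega)) (hinj 3 5 (by omega) (by omega) (by omega))
      (hinj 1 5 (by omega) (by omega) (by omega)).symm
      (hinj 2 4 (by omega) (by omega) (by omega)) (hinj 4 6 (by omega) (by omega) (by omega))
      (hinj 2 6 (by omega) (by omega) (by omega)).symm

lemma mem_synthemes_of_nodup {a b c d e f : α} (h : [a, b, c, d, e, f].Nodup)
    (hH : ∀ x, x ∈ H ↔ x ∈ [a, b, c, d, e, f]) :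
    ({{a, b}, {c, d}, {e, f}} : Finset (Finset α)) ∈ synthemes H := by
  simp only [List.nodup_cons, List.mem_cons, List.not_mem_nil, or_false, not_or] at h hH
  obtain ⟨⟨hab, hac, had, hae, haf⟩, ⟨hbc, hbd, hbe, hbf⟩, ⟨hcd, hce, hcf⟩, ⟨hde, hdf⟩, hef, -⟩ := h
  have h1 : Disjoint ({a, b} : Finset α) {c, d} := by
    simp; grind
  have h2 : Disjoint ({a, b} : Finset α) {e, f} := by
    simp; grind
  have h3 : Disjoint ({c, d} : Finset α) {e, f} := by
    simp; grind
  have n1 : ({a, b} : Finset α) ≠ {c, d} := h1.ne (by simp)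
  have n2 : ({a, b} : Finset α) ≠ {e, f} := h2.ne (by simp)
  have n3 : ({c, d} : Finset α) ≠ {e, f} := h3.ne (by simp)
  refine Finset.mem_filter.2 ⟨Finset.mem_powersetCard.2
    ⟨?_, Finset.card_eq_three.2 ⟨_, _, _, n1, n2, n3, rfl⟩⟩, ?_, ?_⟩
  · simp [Finset.insert_subset_iff, Finset.mem_powersetCard, *]
  · simp only [Finset.mem_insert, Finset.mem_singleton]
    rintro D (rfl | rfl | rfl) E (rfl | rfl | rfl) hne <;>
      first
        | exact absurd rfl hne
        | assumption
        | exact Disjoint.symm (by assumption)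
  · ext x
    simp [hH]
    tauto

lemma levi_egirth_le (hH : H.card = 6) : (duadSynthemeLevi H).egirth ≤ 8 := by
  obtain ⟨a, b, c, d, e, f, hl⟩ : ∃ a b c d e f, H.toList = [a, b, c, d, e, f] := by
    have hlen := H.length_toList
    rw [hH] at hlen
    match H.toList, hlen with
    | [a, b, c, d, e, f], _ => exact ⟨a, b, c, d, e, f, rfl⟩
  have hnd : [a, b, c, d, e, f].Nodup := hl ▸ H.nodup_toList
  have hmem : ∀ x, x ∈ H ↔ x ∈ [a, b, c, d, e, f] := fun x => by rw [← hl, Finset.mem_toList]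
  have hP₁ : ({{a, b}, {d, e}, {c, f}} : Finset (Finset α)) ∈ synthemes H :=
    mem_synthemes_of_nodup (by grind) (by grind)
  have hP₂ : ({{d, e}, {a, c}, {b, f}} : Finset (Finset α)) ∈ synthemes H :=
    mem_synthemes_of_nodup (by grind) (by grind)
  have hP₃ : ({{a, c}, {d, f}, {b, e}} : Finset (Finset α)) ∈ synthemes H :=
    mem_synthemes_of_nodup (by grind) (by grind)
  have hP₄ : ({{d, f}, {a, b}, {c, e}} : Finset (Finset α)) ∈ synthemes H :=
    mem_synthemes_of_nodup (by grind) (by grind)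
  have hD₁ : ({a, b} : Finset α) ∈ H.powersetCard 2 :=
    Finset.mem_powersetCard.2 (syntheme_duad hP₁ (by simp))
  have hD₂ : ({d, e} : Finset α) ∈ H.powersetCard 2 :=
    Finset.mem_powersetCard.2 (syntheme_duad hP₁ (by simp))
  have hD₃ : ({a, c} : Finset α) ∈ H.powersetCard 2 :=
    Finset.mem_powersetCard.2 (syntheme_duad hP₂ (by simp))
  have hD₄ : ({d, f} : Finset α) ∈ H.powersetCard 2 :=
    Finset.mem_powersetCard.2 (syntheme_duad hP₃ (by simp))
  simp only [List.nodup_cons, List.mem_cons, List.not_mem_nil, or_false, not_or] at hnd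
  have n12 : ({a, b} : Finset α) ≠ {d, e} := fun h => by
    have := Finset.ext_iff.1 h a; grind
  have n13 : ({a, b} : Finset α) ≠ {a, c} := fun h => by
    have := Finset.ext_iff.1 h b; grind
  have n14 : ({a, b} : Finset α) ≠ {d, f} := fun h => by
    have := Finset.ext_iff.1 h a; grind
  have n23 : ({d, e} : Finset α) ≠ {a, c} := fun h => by
    have := Finset.ext_iff.1 h d; grind
  have n24 : ({d, e} : Finset α) ≠ {d, f} := fun h => by
    have := Finset.ext_iff.1 h e; grind
  have n34 : ({a, c} : Finset α) ≠ {d, f} := fun h => by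
    have := Finset.ext_iff.1 h a; grind
  -- Opposite duads of the cycle meet, so no syntheme contains both.
  have m13 : ∀ P ∈ synthemes H, {a, b} ∈ P → {a, c} ∉ P := fun P hP h h' => by
    simpa using syntheme_disjoint hP h h' n13
  have m24 : ∀ P ∈ synthemes H, {d, e} ∈ P → {d, f} ∉ P := fun P hP h h' => by
    simpa using syntheme_disjoint hP h h' n24
  generalize hQ₁ : ({{a, b}, {d, e}, {c, f}} : Finset (Finset α)) = P₁ at hP₁
  generalize hQ₂ : ({{d, e}, {a, c}, {b, f}} : Finset (Finset α)) = P₂ at hP₂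
  generalize hQ₃ : ({{a, c}, {d, f}, {b, e}} : Finset (Finset α)) = P₃ at hP₃
  generalize hQ₄ : ({{d, f}, {a, b}, {c, e}} : Finset (Finset α)) = P₄ at hP₄
  have i11 : {a, b} ∈ P₁ := by simp [← hQ₁]
  have i21 : {d, e} ∈ P₁ := by simp [← hQ₁]
  have i22 : {d, e} ∈ P₂ := by simp [← hQ₂]
  have i32 : {a, c} ∈ P₂ := by simp [← hQ₂]
  have i33 : {a, c} ∈ P₃ := by simp [← hQ₃]
  have i43 : {d, f} ∈ P₃ := by simp [← hQ₃]
  have i44 : {d, f} ∈ P₄ := by simp [← hQ₄]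
  have i14 : {a, b} ∈ P₄ := by simp [← hQ₄]
  have p12 : P₁ ≠ P₂ := fun h => m13 _ hP₁ i11 (h ▸ i32)
  have p13 : P₁ ≠ P₃ := fun h => m13 _ hP₁ i11 (h ▸ i33)
  have p14 : P₁ ≠ P₄ := fun h => m24 _ hP₁ i21 (h ▸ i44)
  have p23 : P₂ ≠ P₃ := fun h => m24 _ hP₂ i22 (h ▸ i43)
  have p24 : P₂ ≠ P₄ := fun h => m24 _ hP₂ i22 (h ▸ i44)
  have p34 : P₃ ≠ P₄ := fun h => m13 _ hP₄ i14 (h ▸ i33)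
  generalize ({a, b} : Finset α) = D₁ at *
  generalize ({d, e} : Finset α) = D₂ at *
  generalize ({a, c} : Finset α) = D₃ at *
  generalize ({d, f} : Finset α) = D₄ at *
  let G := duadSynthemeLevi H
  let w : G.Walk (Sum.inl ⟨D₁, hD₁⟩) (Sum.inl ⟨D₁, hD₁⟩) :=
    .cons (v := Sum.inr ⟨P₁, hP₁⟩) ((levi_adj_inl_inr _ _).2 i11) <|
    .cons (v := Sum.inl ⟨D₂, hD₂⟩) ((levi_adj_inr_inl _ _).2 i21) <|
    .cons (v := Sum.inr ⟨P₂, hP₂⟩) ((levi_adj_inl_inr _ _).2 i22) <|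
    .cons (v := Sum.inl ⟨D₃, hD₃⟩) ((levi_adj_inr_inl _ _).2 i32) <|
    .cons (v := Sum.inr ⟨P₃, hP₃⟩) ((levi_adj_inl_inr _ _).2 i33) <|
    .cons (v := Sum.inl ⟨D₄, hD₄⟩) ((levi_adj_inr_inl _ _).2 i43) <|
    .cons (v := Sum.inr ⟨P₄, hP₄⟩) ((levi_adj_inl_inr _ _).2 i44) <|
    .cons (v := Sum.inl ⟨D₁, hD₁⟩) ((levi_adj_inr_inl _ _).2 i14) .nil
  have hw : w.IsCycle := by
    simp only [w, SimpleGraph.Walk.cons_isCycle_iff, SimpleGraph.Walk.cons_isPath_iff]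
    simp [n12.symm, n13.symm, n14.symm, n12, n13, n14, n23, n24, n34, p12, p13, p14, p23, p24, p34]
  exact SimpleGraph.egirth_le_length hw

end DuadSyntheme

/-- For a six-element set `H`, the Levi graph of duads versus synthemes (Tutte's
8-cage) has girth exactly eight; in particular it contains no hexacycles. -/
theorem duadSynthemeLevi_egirth {α : Type*} [DecidableEq α]
    (H : Finset α) (hH : H.card = 6) :
    (duadSynthemeLevi H).egirth = 8 := by
  refine le_antisymm (levi_egirth_le hH) (SimpleGraph.le_egirth.2 fun u p hp => ?_)
  exact_mod_cast levi_eight_le_length p hp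
end

section
/- Let H be a finite set with exactly 6 elements. Then there are exactly 6 totals of H, i.e., exactly 6 sets of five synthemes of H with the property that every duad of H belongs to exactly one syntheme in the set. -/
/-- The totals of a finite set `H`: sets of five synthemes such that every duad of `H`
belongs to exactly one of them (one-factorizations of the complete graph on `H`). -/
def totals {α : Type*} [DecidableEq α] (H : Finset α) :
    Finset (Finset (Finset (Finset α))) :=
  ((synthemes H).powersetCard 5).filter
    (fun F => ∀ D ∈ H.powersetCard 2, (F.filter (fun P => D ∈ P)).card = 1)


open Finset in
/-- Synthemes are natural under injections; the embedding on the right applies `f` to every point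
of every duad of a syntheme. -/
theorem synthemes_map {α β : Type*} [DecidableEq α] [DecidableEq β] (f : α ↪ β) (H : Finset α) :
    synthemes (H.map f) =
      (synthemes H).map (mapEmbedding (mapEmbedding f).toEmbedding).toEmbedding := by
  have hsup (P : Finset (Finset α)) :
      (P.map (mapEmbedding f).toEmbedding).sup id = (P.sup id).map f := by
    ext x
    simp only [mem_sup, mem_map, id]
    aesop
  unfold synthemes
  have h2 : powersetCard 2 (H.map f) = (powersetCard 2 H).map (mapEmbedding f).toEmbedding :=
    powersetCard_map f 2 H
  rw [h2, powersetCard_map, filter_map]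
  congr 1
  refine filter_congr fun P _ => ?_
  simp [hsup, mapEmbedding_apply]

open Finset in
/-- Totals are natural under injections, so their number depends only on the size of `H`. -/
theorem totals_map {α β : Type*} [DecidableEq α] [DecidableEq β] (f : α ↪ β) (H : Finset α) :
    totals (H.map f) =
      (totals H).map (mapEmbedding
        (mapEmbedding (mapEmbedding f).toEmbedding).toEmbedding).toEmbedding := by
  unfold totals
  rw [synthemes_map, powersetCard_map, powersetCard_map, filter_map]
  congr 1
  refine filter_congr fun F _ => ?_
  have hc (D : Finset α) : ((F.map (mapEmbedding (mapEmbedding f).toEmbedding).toEmbedding).filter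
      (fun P => D.map f ∈ P)).card = (F.filter (fun P => D ∈ P)).card := by
    rw [filter_map, card_map]
    congr 1
    refine filter_congr fun P _ => ?_
    exact mem_map' (mapEmbedding f).toEmbedding
  rw [Function.comp_apply, forall_mem_map]
  exact forall₂_congr fun D _ => by rw [← hc D]; rfl

/-- The count for the model set `Fin 6`, by exhaustive enumeration evaluated in the kernel. -/
theorem totals_fin_six : (totals (Finset.univ : Finset (Fin 6))).card = 6 := by
  decide +kernel

/-- A six-element set has exactly six totals. -/
theorem totals_count {α : Type*} [DecidableEq α]
    (H : Finset α) (hH : H.card = 6) :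
    (totals H).card = 6 := by
  let f : Fin 6 ↪ α := (H.equivFinOfCardEq hH).symm.toEmbedding.trans (Function.Embedding.subtype _)
  have hf : Finset.univ.map f = H := by
    rw [← Finset.map_map, Finset.map_univ_equiv, Finset.univ_eq_attach, Finset.attach_map_val]
  rw [← hf, totals_map, Finset.card_map, totals_fin_six]
end

section
/- Let a, b, c : ZMod 12 be pairwise distinct pitch classes. There exist pairwise distinct major triads M i, M j, M k (with M r = {r, r+4, r+7}) such that {a, b} ⊆ M i, {b, c} ⊆ M j and {a, c} ⊆ M k if and only if the set {a, b, c} is either a minor triad {r, r+3, r+7} or an augmented triad {r, r+4, r+8} for some r : ZMod 12. Hence the hexacycles of the pitch-to-major-triad Levi graph correspond exactly to the twelve minor triads together with the four augmented triads. -/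
/-!
Transposition by `a` acts on everything in sight, so one may assume `a = 0`: writing `b = a + u`,
`c = a + v` and shifting the roots by `a` as well turns the claim into a statement about the two
intervals `u`, `v` only (`hexacycle_at_zero`), which is a finite check. It holds because two
distinct notes of a major triad differ by `±3`, `±4` or `±5` and each such pair lies in exactly one
major triad. The three cyclic gaps of `{a, b, c}` thus lie in `{3, 4, 5}` and sum to `12`, so they are
`4 + 4 + 4` (augmented triads) or one of the two cyclic orders of `3 + 4 + 5` (minor triads, and
major triads, for which the three containing triads coincide).
-/

/-- The major triad with root `i`: the set `{i, i+4, i+7}` in `ZMod 12`. -/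
def majorTriad (i : ZMod 12) : Finset (ZMod 12) := {i, i + 4, i + 7}

lemma majorTriad_injective : Function.Injective majorTriad := by
  unfold Function.Injective
  decide

lemma add_mem_majorTriad_add (a x i : ZMod 12) :
    a + x ∈ majorTriad (a + i) ↔ x ∈ majorTriad i := by
  simp [majorTriad, add_assoc]

lemma transpose_triple_eq (a x y z x' y' z' : ZMod 12) :
    ({a + x, a + y, a + z} : Finset (ZMod 12)) = {a + x', a + y', a + z'} ↔
      ({x, y, z} : Finset (ZMod 12)) = {x', y', z'} := by
  refine Iff.trans ?_ (Finset.image_inj (add_right_injective a))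
  simp [Finset.image_insert]

/-- The classification for the pitch classes `0, u, v`. The conditions on each root directly follow
its quantifier, so that the evaluation of the nested existentials prunes early. -/
lemma hexacycle_at_zero : ∀ u v : ZMod 12, u ≠ 0 → v ≠ 0 → u ≠ v →
    ((∃ i, (0 ∈ majorTriad i ∧ u ∈ majorTriad i) ∧
      ∃ j, (u ∈ majorTriad j ∧ v ∈ majorTriad j) ∧ i ≠ j ∧
      ∃ k, (0 ∈ majorTriad k ∧ v ∈ majorTriad k) ∧ j ≠ k ∧ i ≠ k) ↔
    ∃ r : ZMod 12, ({0, u, v} : Finset (ZMod 12)) = {r, r + 3, r + 7} ∨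
      ({0, u, v} : Finset (ZMod 12)) = {r, r + 4, r + 8}) := by
  decide +kernel

/-- For pairwise distinct pitch classes `a, b, c`: there exist pairwise distinct major
triads `M i`, `M j`, `M k` with `{a,b} ⊆ M i`, `{b,c} ⊆ M j` and `{a,c} ⊆ M k` (i.e.
`a, b, c` together with these triads form a hexacycle of the pitch-to-major-triad Levi
graph) if and only if `{a, b, c}` is a minor triad `{r, r+3, r+7}` or an augmented
triad `{r, r+4, r+8}` for some root `r`. -/
theorem hexacycles_are_minor_or_augmented (a b c : ZMod 12)
    (hab : a ≠ b) (hac : a ≠ c) (hbc : b ≠ c) :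
    (∃ i j k : ZMod 12,
      majorTriad i ≠ majorTriad j ∧ majorTriad j ≠ majorTriad k ∧
      majorTriad i ≠ majorTriad k ∧
      ({a, b} : Finset (ZMod 12)) ⊆ majorTriad i ∧
      ({b, c} : Finset (ZMod 12)) ⊆ majorTriad j ∧
      ({a, c} : Finset (ZMod 12)) ⊆ majorTriad k) ↔
    (∃ r : ZMod 12,
      ({a, b, c} : Finset (ZMod 12)) = {r, r + 3, r + 7} ∨
      ({a, b, c} : Finset (ZMod 12)) = {r, r + 4, r + 8}) := by
  obtain ⟨u, rfl⟩ : ∃ u, b = a + u := ⟨b - a, by ring⟩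
  obtain ⟨v, rfl⟩ : ∃ v, c = a + v := ⟨c - a, by ring⟩
  have key := hexacycle_at_zero u v (by simpa using hab) (by simpa using hac) (by simpa using hbc)
  have mem_zero (i : ZMod 12) : a ∈ majorTriad (a + i) ↔ 0 ∈ majorTriad i := by
    simpa using add_mem_majorTriad_add a 0 i
  have triple (x y z : ZMod 12) :
      ({a, a + u, a + v} : Finset (ZMod 12)) = {a + x, a + y, a + z} ↔
        ({0, u, v} : Finset (ZMod 12)) = {x, y, z} := by
    simpa using transpose_triple_eq a 0 u v x y z
  simp only [Finset.insert_subset_iff, Finset.singleton_subset_iff,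
    majorTriad_injective.ne_iff]
  -- Every root is `a + i` for a unique `i`, so the quantifiers may range over the shifted roots.
  have surj := (Equiv.addLeft a).surjective
  refine surj.exists₃.trans (Iff.trans ?_ surj.exists.symm)
  simp only [Equiv.coe_addLeft, add_assoc, triple, mem_zero, add_mem_majorTriad_add, ← key,
    ne_eq, add_right_inj]
  constructor
  · rintro ⟨i, j, k, hij, hjk, hik, hi, hj, hk⟩
    exact ⟨i, hi, j, hj, hij, k, hk, hjk, hik⟩
  · rintro ⟨i, hi, j, hj, hij, k, hk, hjk, hik⟩
    exact ⟨i, j, k, hij, hjk, hik, hi, hj, hk⟩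
end
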